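/- More generally, for a 2-form Ω = Σ_{i<j} c_{ij} ωᵢ∧ωⱼ on K^m, the k-fold wedge power satisfies Ω^{∧k} = k!·Σ_{i₁<...<i_{2k}} Pf(C(i₁,...,i_{2k}))·ω_{i₁}∧...∧ω_{i_{2k}}, where C(i₁,...,i_{2k}) is the principal submatrix of the skew matrix C on rows and columns i₁,...,i_{2k}. -/

import Mathlib

open Matrix

/-- The even index `2i` in `Fin (2*n)`. -/
def evenIdx {n : ℕ} (i : Fin n) : Fin (2 * n) := ⟨2 * i.val, by have := i.isLt; omega⟩

/-- The odd index `2i+1` in `Fin (2*n)`. -/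
def oddIdx {n : ℕ} (i : Fin n) : Fin (2 * n) := ⟨2 * i.val + 1, by have := i.isLt; omega⟩

/-- The Pfaffian of a `2n × 2n` matrix over a commutative ring, defined as the signed sum
over perfect matchings of `{0, …, 2n-1}` of the products of the corresponding entries. -/
def pfaffian {R : Type*} [CommRing R] {n : ℕ} (A : Matrix (Fin (2 * n)) (Fin (2 * n)) R) : R :=
  ∑ σ ∈ Finset.univ.filter (fun σ : Equiv.Perm (Fin (2 * n)) =>
      (∀ i : Fin n, σ (evenIdx i) < σ (oddIdx i)) ∧
      ∀ i j : Fin n, i < j → σ (evenIdx i) < σ (evenIdx j)),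
    (Equiv.Perm.sign σ : ℤ) • ∏ i : Fin n, A (σ (evenIdx i)) (σ (oddIdx i))

/-- The index set `Fin (2 * n)` as `n` consecutive blocks of length two. -/
def blockEquiv (n : ℕ) : Fin n × Fin 2 ≃ Fin (2 * n) :=
  finProdFinEquiv.trans (finCongr (Nat.mul_comm n 2))

theorem blockEquiv_zero {n : ℕ} (i : Fin n) : blockEquiv n (i, 0) = evenIdx i := by
  ext; simp [blockEquiv, evenIdx]

theorem blockEquiv_one {n : ℕ} (i : Fin n) : blockEquiv n (i, 1) = oddIdx i := by
  ext; simp [blockEquiv, oddIdx, Nat.add_comm]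

/-- The permutation of `Fin (2 * n)` that permutes the blocks of length two by `τ`. -/
def blockPerm {n : ℕ} (τ : Equiv.Perm (Fin n)) : Equiv.Perm (Fin (2 * n)) :=
  (blockEquiv n).permCongr (Equiv.prodCongrLeft fun _ : Fin 2 => τ)

theorem blockPerm_evenIdx {n : ℕ} (τ : Equiv.Perm (Fin n)) (i : Fin n) :
    blockPerm τ (evenIdx i) = evenIdx (τ i) := by
  simp [blockPerm, ← blockEquiv_zero]

theorem blockPerm_oddIdx {n : ℕ} (τ : Equiv.Perm (Fin n)) (i : Fin n) :
    blockPerm τ (oddIdx i) = oddIdx (τ i) := by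
  simp [blockPerm, ← blockEquiv_one]

theorem sign_blockPerm {n : ℕ} (τ : Equiv.Perm (Fin n)) :
    Equiv.Perm.sign (blockPerm τ) = 1 := by
  rw [blockPerm, Equiv.Perm.sign_permCongr, Equiv.Perm.sign_prodCongrLeft]
  simp

/-- Tuples indexed by `Fin (2 * n)` are the same as `n`-tuples of pairs. -/
def tuplePairEquiv (n : ℕ) (α : Type*) : (Fin (2 * n) → α) ≃ (Fin n → α × α) :=
  ((Equiv.arrowCongr (blockEquiv n).symm (Equiv.refl α)).trans
    (Equiv.curry (Fin n) (Fin 2) α)).trans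
      (Equiv.arrowCongr (Equiv.refl (Fin n)) (finTwoArrowEquiv α))

theorem tuplePairEquiv_apply {n : ℕ} {α : Type*} (g : Fin (2 * n) → α) (t : Fin n) :
    tuplePairEquiv n α g t = (g (evenIdx t), g (oddIdx t)) := by
  simp [tuplePairEquiv, finTwoArrowEquiv, ← blockEquiv_zero, ← blockEquiv_one]

theorem existsUnique_perm_strictMono {n : ℕ} {α : Type*} [LinearOrder α] {a : Fin n → α}
    (ha : Function.Injective a) : ∃! τ : Equiv.Perm (Fin n), StrictMono (a ∘ τ) := by
  refine ⟨Tuple.sort a, (Tuple.monotone_sort a).strictMono_of_injective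
    (ha.comp (Tuple.sort a).injective), fun τ hτ => Equiv.ext fun i => ha ?_⟩
  exact congrFun (Tuple.unique_monotone hτ.monotone (Tuple.monotone_sort a)) i

open scoped Classical in
theorem sum_perm_ite_strictMono {n : ℕ} {α M : Type*} [LinearOrder α] [AddCommMonoid M]
    {a : Fin n → α} (ha : Function.Injective a) (x : M) :
    ∑ τ : Equiv.Perm (Fin n), (if StrictMono (a ∘ τ) then x else 0) = x := by
  obtain ⟨τ, hτ, huniq⟩ := existsUnique_perm_strictMono ha
  rw [Finset.sum_eq_single τ (fun τ' _ h => if_neg fun h' => h (huniq τ' h')) (by simp)]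
  exact if_pos hτ

open scoped Classical in
/-- A sum over all tuples of a function vanishing on non-injective tuples can be split into
the strictly increasing tuples and their rearrangements. -/
theorem sum_eq_sum_strictMono_sum_perm {n : ℕ} {α M : Type*} [LinearOrder α] [Fintype α]
    [AddCommMonoid M] (G : (Fin n → α) → M) (hG : ∀ g, ¬ Function.Injective g → G g = 0) :
    ∑ g, G g = ∑ f ∈ Finset.univ.filter (fun f : Fin n → α => StrictMono f),
      ∑ σ : Equiv.Perm (Fin n), G (f ∘ σ) := by
  have key (g : Fin n → α) :
      G g = ∑ σ : Equiv.Perm (Fin n), if StrictMono (g ∘ σ) then G g else 0 := by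
    by_cases hg : Function.Injective g
    · rw [sum_perm_ite_strictMono hg]
    · simp [hG g hg]
  rw [Finset.sum_congr rfl fun g _ => key g, Finset.sum_comm,
    Finset.sum_comm (s := Finset.univ.filter (fun f : Fin n → α => StrictMono f))]
  refine Fintype.sum_equiv (Equiv.inv (Equiv.Perm (Fin n))) _ _ fun σ => ?_
  rw [Finset.sum_filter]
  refine Fintype.sum_equiv (Equiv.arrowCongr σ.symm (Equiv.refl α)) _ _ fun g => ?_
  have h₁ : Equiv.arrowCongr σ.symm (Equiv.refl α) g = g ∘ σ := by ext; simp
  have h₂ : (g ∘ σ) ∘ (Equiv.inv (Equiv.Perm (Fin n)) σ) = g := by ext; simp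
  rw [h₁, h₂]

/-- Dropping the ordering of the blocks in the definition of the Pfaffian counts every
perfect matching `n!` times. -/
theorem sum_perm_eq_factorial_mul_pfaffian {R : Type*} [CommRing R] {n : ℕ}
    (A : Matrix (Fin (2 * n)) (Fin (2 * n)) R) :
    ∑ σ : Equiv.Perm (Fin (2 * n)),
      (if ∀ i : Fin n, σ (evenIdx i) < σ (oddIdx i) then
        (Equiv.Perm.sign σ : ℤ) • ∏ i : Fin n, A (σ (evenIdx i)) (σ (oddIdx i)) else 0) =
      (n.factorial : R) * pfaffian A := by
  classical
  set F : Equiv.Perm (Fin (2 * n)) → R := fun σ =>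
    if ∀ i : Fin n, σ (evenIdx i) < σ (oddIdx i) then
      (Equiv.Perm.sign σ : ℤ) • ∏ i : Fin n, A (σ (evenIdx i)) (σ (oddIdx i)) else 0 with hF
  have hinv (σ : Equiv.Perm (Fin (2 * n))) (τ : Equiv.Perm (Fin n)) :
      F (σ * blockPerm τ) = F σ := by
    simp only [hF, Equiv.Perm.mul_apply, blockPerm_evenIdx, blockPerm_oddIdx,
      Equiv.Perm.sign_mul, sign_blockPerm, mul_one]
    rw [Equiv.prod_comp τ fun i => A (σ (evenIdx i)) (σ (oddIdx i))]
    exact if_congr (τ.forall_congr_right (q := fun i => σ (evenIdx i) < σ (oddIdx i))) rfl rfl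
  have hpf : pfaffian A =
      ∑ σ : Equiv.Perm (Fin (2 * n)), if StrictMono (fun i => σ (evenIdx i)) then F σ else 0 := by
    rw [pfaffian, Finset.sum_filter]
    refine Finset.sum_congr rfl fun σ _ => ?_
    simp only [hF, ← ite_and, StrictMono]
    exact if_congr and_comm rfl rfl
  have heven : Function.Injective (evenIdx (n := n)) := fun i j h => by
    simpa [evenIdx, Fin.ext_iff] using h
  calc ∑ σ, F σ
      = ∑ σ, ∑ τ : Equiv.Perm (Fin n),
          if StrictMono ((fun i => σ (evenIdx i)) ∘ τ) then F σ else 0 :=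
        Finset.sum_congr rfl fun σ _ =>
          (sum_perm_ite_strictMono (σ.injective.comp heven) (F σ)).symm
    _ = ∑ τ : Equiv.Perm (Fin n), ∑ σ,
          if StrictMono ((fun i => σ (evenIdx i)) ∘ τ) then F σ else 0 := Finset.sum_comm
    _ = ∑ _τ : Equiv.Perm (Fin n), pfaffian A := by
        refine Finset.sum_congr rfl fun τ _ => ?_
        rw [hpf]
        refine Fintype.sum_equiv (Equiv.mulRight (blockPerm τ)) _ _ fun σ => ?_
        simp only [Equiv.coe_mulRight, hinv, Equiv.Perm.mul_apply, blockPerm_evenIdx]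
        rfl
    _ = (n.factorial : R) * pfaffian A := by
        simp [Fintype.card_perm]

theorem prod_ofFn_mul_pairs {M : Type*} [Monoid M] {n : ℕ} (x : Fin (2 * n) → M) :
    (List.ofFn fun t : Fin n => x (evenIdx t) * x (oddIdx t)).prod = (List.ofFn x).prod := by
  rw [List.ofFn_mul', List.prod_flatten, List.map_ofFn]
  congr 2
  ext t
  simp [List.ofFn_succ, evenIdx, oddIdx]

/-- The power of a sum of products of pairs, expanded into a sum over tuples. -/
theorem sum_smul_mul_pow {R A ι : Type*} [CommRing R] [Ring A] [Algebra R A] [Fintype ι]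
    (D : ι → ι → R) (e : ι → A) (n : ℕ) :
    (∑ i, ∑ j, D i j • (e i * e j)) ^ n =
      ∑ g : Fin (2 * n) → ι, (∏ t, D (g (evenIdx t)) (g (oddIdx t))) •
        (List.ofFn fun t => e (g t)).prod := by
  classical
  rw [← Fintype.sum_prod_type' fun i j => D i j • (e i * e j),
    ← MultilinearMap.mkPiAlgebraFin_apply_const (R := R), MultilinearMap.map_sum]
  symm
  refine Fintype.sum_equiv (tuplePairEquiv n ι) _ _ fun g => ?_
  rw [MultilinearMap.map_smul_univ, MultilinearMap.mkPiAlgebraFin_apply]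
  simp only [tuplePairEquiv_apply]
  rw [prod_ofFn_mul_pairs fun t => e (g t)]

open scoped Classical in
/-- For a 2-form `Ω = Σ_{i<j} c_{ij} ωᵢ∧ωⱼ` on `K^m` with skew coefficient matrix `C`, the
`k`-fold wedge power is
`Ω^k = k!·Σ_{i₁<⋯<i_{2k}} Pf(C(i₁,…,i_{2k}))·ω_{i₁}∧⋯∧ω_{i_{2k}}`,
the sum being over principal `2k × 2k` submatrices of `C`. -/
theorem stmt16 {K : Type*} [Field K] [CharZero K] (m k : ℕ)
    (C : Matrix (Fin m) (Fin m) K) (hC : Cᵀ = -C)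
    (Ω : ExteriorAlgebra K (Fin m → K))
    (hΩ : Ω = ∑ i : Fin m, ∑ j ∈ Finset.univ.filter (fun j => i < j),
        C i j • (ExteriorAlgebra.ι K (Pi.single i (1 : K)) *
                 ExteriorAlgebra.ι K (Pi.single j (1 : K)))) :
    Ω ^ k = (k.factorial : K) •
      ∑ f ∈ Finset.univ.filter (fun f : Fin (2 * k) → Fin m => StrictMono f),
        pfaffian (C.submatrix f f) •
          (List.ofFn fun t : Fin (2 * k) =>
            ExteriorAlgebra.ι K (Pi.single (f t) (1 : K))).prod := by
  set D : Fin m → Fin m → K := fun i j => if i < j then C i j else 0 with hD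
  set e : Fin m → Fin m → K := fun i => Pi.single i 1 with he
  have hΩ' : Ω = ∑ i, ∑ j, D i j • (ExteriorAlgebra.ι K (e i) * ExteriorAlgebra.ι K (e j)) := by
    rw [hΩ]
    refine Finset.sum_congr rfl fun i _ => ?_
    rw [Finset.sum_filter]
    refine Finset.sum_congr rfl fun j _ => ?_
    simp only [hD, he, ite_smul, zero_smul]
  rw [hΩ', sum_smul_mul_pow D (fun i => ExteriorAlgebra.ι K (e i)) k]
  simp only [← ExteriorAlgebra.ιMulti_apply]
  rw [sum_eq_sum_strictMono_sum_perm]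
  · rw [Finset.smul_sum]
    refine Finset.sum_congr rfl fun f hf => ?_
    have hf : StrictMono f := (Finset.mem_filter.1 hf).2
    rw [smul_smul, ← sum_perm_eq_factorial_mul_pfaffian, Finset.sum_smul]
    refine Finset.sum_congr rfl fun σ _ => ?_
    have hperm := (ExteriorAlgebra.ιMulti K (M := Fin m → K) (2 * k)).map_perm
      (fun t => e (f t)) σ
    simp only [Function.comp_def] at hperm ⊢
    rw [hperm]
    simp only [hD, hf.lt_iff_lt, Finset.prod_ite_zero, Finset.mem_univ, true_imp_iff,
      Matrix.submatrix_apply]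
    split_ifs
    · rw [smul_comm, Units.smul_def, smul_assoc]
    · simp
  · intro g hg
    rw [AlternatingMap.map_eq_zero_of_not_injective, smul_zero]
    exact fun h => hg fun i j hij => h (congrArg e hij)
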